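/- In the HCPP instance I_φ=(G,ω,𝒫,≺) produced by the construction from a 3-CNF formula φ, the multigraph ⟨G⟩E_0 induced by the edge class E_0 is Eulerian: it is connected and it is the union of pairwise edge-disjoint cycles, so every vertex of ⟨G⟩E_0 is balanced. -/

import Mathlib

namespace HCPPFormal

variable {V : Type} [DecidableEq V]

/-- The degree of a vertex in a multigraph given as a multiset of edges
(loops count twice, multiplicities are counted). -/
def mDeg (M : Multiset (Sym2 V)) (v : V) : ℕ :=
  (M.map fun e => if e = Sym2.diag v then 2 else if v ∈ e then 1 else 0).sum

/-- The vertex set of the multigraph induced by a multiset of edges. -/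
def mVerts (M : Multiset (Sym2 V)) : Set V := {v | ∃ e ∈ M, v ∈ e}

/-- Adjacency in the multigraph induced by a multiset of edges. -/
def mAdj (M : Multiset (Sym2 V)) (a b : V) : Prop := s(a, b) ∈ M

/-- The multigraph induced by a multiset of edges is connected. -/
def mConnected (M : Multiset (Sym2 V)) : Prop :=
  ∀ u ∈ mVerts M, ∀ v ∈ mVerts M, Relation.ReflTransGen (mAdj M) u v

/-- The list of edges traversed by a walk, given as its list of vertices. -/
def walkEdgeList (w : List V) : List (Sym2 V) :=
  (w.zip w.tail).map fun p => s(p.1, p.2)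

/-- The multiset of edges traversed by a walk (with multiplicities). -/
def walkEdges (w : List V) : Multiset (Sym2 V) :=
  (walkEdgeList w : Multiset (Sym2 V))

/-- The weight of a multiset of edges. -/
def mWeight (ω : Sym2 V → ℕ) (M : Multiset (Sym2 V)) : ℕ := (M.map ω).sum

/-- The weight of a walk. -/
def wWeight (ω : Sym2 V → ℕ) (w : List V) : ℕ := mWeight ω (walkEdges w)

/-- A multiset `M` of edges is a perfect matching on the vertex set `U`:
it is a set of pairwise vertex-disjoint non-loop edges
whose endpoints are exactly the vertices of `U`. -/
def IsPerfectMatchingOn (M : Multiset (Sym2 V)) (U : Set V) : Prop :=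
  M.Nodup ∧ (∀ e ∈ M, ¬ e.IsDiag) ∧
  (∀ e ∈ M, ∀ e' ∈ M, e ≠ e' → ∀ v : V, v ∈ e → v ∉ e') ∧
  mVerts M = U



/-- Vertices of the graph constructed from a 3-CNF formula:
`t i l`, `z i l`, `f i l` are the vertices `t_i^ℓ`, `z_i^ℓ`, `f_i^ℓ`;
`cs` is the vertex `c*`; `c1 j`, `c2 j` are `c_j¹`, `c_j²`;
`a i j`, `b i j` are the auxiliary vertices `a_{ij}`, `b_{ij}`. -/
inductive V3 : Type where
  | t (i l : ℕ) : V3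
  | z (i l : ℕ) : V3
  | f (i l : ℕ) : V3
  | cs : V3
  | c1 (j : ℕ) : V3
  | c2 (j : ℕ) : V3
  | a (i j : ℕ) : V3
  | b (i j : ℕ) : V3
deriving DecidableEq

/-- A 3-CNF formula with variables `0, …, n-1` and clauses `0, …, m-1`;
the pair `(i, true)` represents the literal `x_i` and `(i, false)` represents `¬x_i`.
Each clause has at most three literals, and no clause contains
both a variable and its negation. -/
structure CNF3 : Type where
  n : ℕ
  m : ℕ
  clause : ℕ → Finset (ℕ × Bool)
  size_le : ∀ j < m, (clause j).card ≤ 3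
  var_lt : ∀ j < m, ∀ p ∈ clause j, p.1 < n
  no_taut : ∀ j < m, ∀ i : ℕ, ¬ ((i, true) ∈ clause j ∧ (i, false) ∈ clause j)

/-- The clauses containing the variable `x_i` (positively or negatively). -/
def occ (φ : CNF3) (i : ℕ) : Finset ℕ :=
  (Finset.range φ.m).filter fun j => (i, true) ∈ φ.clause j ∨ (i, false) ∈ φ.clause j

/-- `μ φ i` is the number of clauses containing `x_i` or `¬x_i`. -/
def μ (φ : CNF3) (i : ℕ) : ℕ := (occ φ i).card

/-- `posOf φ i j` is the (1-based) position `ℓ` such that clause `j` is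
the `ℓ`-th clause containing `x_i` or `¬x_i`. -/
def posOf (φ : CNF3) (i j : ℕ) : ℕ := ((occ φ i).filter fun j' => j' ≤ j).card

/-- The edges of the cycle `X_i`. -/
def Xedges (φ : CNF3) (i : ℕ) : Finset (Sym2 V3) :=
  ((Finset.Ico 1 (6 * μ φ i)).image fun l => s(V3.t i l, V3.t i (l + 1))) ∪
  ((Finset.Ico 1 (6 * μ φ i)).image fun l => s(V3.f i l, V3.f i (l + 1))) ∪
  {s(V3.t i (6 * μ φ i), V3.f i (6 * μ φ i)), s(V3.f i 1, V3.t i 1)}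

/-- The edges of the cycle `Y_{i i'}` where `i' = (i mod n) + 1` (0-based: `(i+1) % n`). -/
def Yedges (φ : CNF3) (i : ℕ) : Finset (Sym2 V3) :=
  {s(V3.t i (6 * μ φ i), V3.f ((i + 1) % φ.n) 1),
   s(V3.f ((i + 1) % φ.n) 1, V3.f i (6 * μ φ i)),
   s(V3.f i (6 * μ φ i), V3.t ((i + 1) % φ.n) 1),
   s(V3.t ((i + 1) % φ.n) 1, V3.t i (6 * μ φ i))}

/-- The edges of the cycle `Z_{ij}` (for a positive occurrence of `x_i` in clause `C_j`). -/
def Zedges (φ : CNF3) (i j : ℕ) : Finset (Sym2 V3) :=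
  {s(V3.t i (6 * posOf φ i j - 3), V3.c1 j),
   s(V3.c1 j, V3.a i j),
   s(V3.a i j, V3.c2 j),
   s(V3.c2 j, V3.t i (6 * posOf φ i j - 2)),
   s(V3.t i (6 * posOf φ i j - 2), V3.b i j),
   s(V3.b i j, V3.t i (6 * posOf φ i j - 3))}

/-- The edges of the cycle `Z̄_{ij}` (for a negative occurrence of `¬x_i` in clause `C_j`). -/
def Zbedges (φ : CNF3) (i j : ℕ) : Finset (Sym2 V3) :=
  {s(V3.f i (6 * posOf φ i j - 3), V3.c1 j),
   s(V3.c1 j, V3.a i j),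
   s(V3.a i j, V3.c2 j),
   s(V3.c2 j, V3.f i (6 * posOf φ i j - 2)),
   s(V3.f i (6 * posOf φ i j - 2), V3.b i j),
   s(V3.b i j, V3.f i (6 * posOf φ i j - 3))}

/-- The edge class `E_0`: all edges of all cycles `X_i`, `Y_{ii'}`, `Z_{ij}`, `Z̄_{ij}`. -/
def E0 (φ : CNF3) : Finset (Sym2 V3) :=
  ((Finset.range φ.n).biUnion fun i => Xedges φ i) ∪
  ((Finset.range φ.n).biUnion fun i => Yedges φ i) ∪
  ((Finset.range φ.m).biUnion fun j =>
    (φ.clause j).biUnion fun p => if p.2 then Zedges φ p.1 j else Zbedges φ p.1 j)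

/-- The edge class `E_i^ℓ`: the edges of the path `P_i^ℓ = (t_i^ℓ, z_i^ℓ, f_i^ℓ)`. -/
def Epl (φ : CNF3) (i l : ℕ) : Finset (Sym2 V3) :=
  {s(V3.t i l, V3.z i l), s(V3.z i l, V3.f i l)}

/-- The edge class `E*`: all edges incident to `c*`,
i.e. the edges of the paths `(c_j¹, c*, c_j²)`. -/
def Estar (φ : CNF3) : Finset (Sym2 V3) :=
  (Finset.range φ.m).biUnion fun j => {s(V3.c1 j, V3.cs), s(V3.cs, V3.c2 j)}

/-- All edges of the constructed graph `G`. -/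
def Eall (φ : CNF3) : Finset (Sym2 V3) :=
  E0 φ ∪ Estar φ ∪
  ((Finset.range φ.n).biUnion fun i => (Finset.Icc 1 (6 * μ φ i)).biUnion fun l => Epl φ i l)

/-- The vertex set `V_FT` of all vertices `t_i^ℓ` and `f_i^ℓ`. -/
def VFT (φ : CNF3) : Set V3 :=
  {v | ∃ i < φ.n, ∃ l : ℕ, 1 ≤ l ∧ l ≤ 6 * μ φ i ∧ (v = V3.t i l ∨ v = V3.f i l)}

/-- The vertex set `V_C` of all vertices `c_j¹` and `c_j²`. -/
def VC (φ : CNF3) : Set V3 :=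
  {v | ∃ j < φ.m, v = V3.c1 j ∨ v = V3.c2 j}


/-- A multiset of edges forms a cycle: it is the edge multiset of a closed walk
with at least three edges whose vertices, apart from the coinciding first and
last vertex, are pairwise distinct. -/
def IsCycleEdgeSet (M : Multiset (Sym2 V)) : Prop :=
  ∃ w : List V, 4 ≤ w.length ∧ w.head? = w.getLast? ∧ w.tail.Nodup ∧ walkEdges w = M

/-! ### Degrees of closed walks -/

lemma mDeg_add (M N : Multiset (Sym2 V)) (v : V) : mDeg (M + N) v = mDeg M v + mDeg N v := by
  simp [mDeg]

lemma walkEdges_cons_cons (a b : V) (w : List V) :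
    walkEdges (a :: b :: w) = s(a, b) ::ₘ walkEdges (b :: w) := by
  simp [walkEdges, walkEdgeList]

lemma walkEdges_single (a : V) : walkEdges [a] = 0 := by
  simp [walkEdges, walkEdgeList]

lemma walk_parity (v : V) : ∀ (l : List V) (a b : V), (a :: l).getLast? = some b →
    Even (mDeg (walkEdges (a :: l)) v + ((if a = v then 1 else 0) + (if b = v then 1 else 0)))
  | [], a, b, h => by
      simp at h
      subst h
      rw [walkEdges_single]
      simp only [mDeg, Multiset.map_zero, Multiset.sum_zero]
      split_ifs <;> decide
  | c :: l, a, b, h => by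
      have ih := walk_parity v l c b (by simpa using h)
      rw [walkEdges_cons_cons]
      have e : mDeg (s(a, c) ::ₘ walkEdges (c :: l)) v =
          ((if a = v then 1 else 0) + (if c = v then 1 else 0)) + mDeg (walkEdges (c :: l)) v := by
        simp only [mDeg, Multiset.map_cons, Multiset.sum_cons, Sym2.diag, Sym2.mem_iff]
        congr 1
        by_cases h1 : a = v <;> by_cases h2 : c = v <;> simp [h1, h2, eq_comm] <;> grind
      rw [e]
      grind

lemma cycle_even {M : Multiset (Sym2 V)} (h : IsCycleEdgeSet M) (v : V) : Even (mDeg M v) := by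
  obtain ⟨w, hl, hc, -, rfl⟩ := h
  cases w with
  | nil => simp at hl
  | cons a l =>
    have := walk_parity v l a a (by rw [← hc]; rfl)
    grind

lemma sum_even {C : Multiset (Multiset (Sym2 V))} (v : V) (h : ∀ c ∈ C, IsCycleEdgeSet c) :
    Even (mDeg C.sum v) := by
  induction C using Multiset.induction with
  | empty => simp [mDeg]
  | cons c C ih =>
    rw [Multiset.sum_cons, mDeg_add]
    exact (cycle_even (h c (by simp)) v).add (ih fun c hc => h c (by simp [hc]))

/-! ### Decomposition into cycles -/

/-- The edge set is a disjoint union of cycles. -/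
def Decomp (S : Finset (Sym2 V)) : Prop :=
  ∃ C : Multiset (Multiset (Sym2 V)), C.sum = S.val ∧ ∀ c ∈ C, IsCycleEdgeSet c

lemma Decomp.union {S T : Finset (Sym2 V)} (hS : Decomp S) (hT : Decomp T) (h : Disjoint S T) :
    Decomp (S ∪ T) := by
  obtain ⟨C, hC, hC'⟩ := hS
  obtain ⟨D, hD, hD'⟩ := hT
  refine ⟨C + D, ?_, ?_⟩
  · rw [Multiset.sum_add, hC, hD, ← Finset.disjUnion_eq_union _ _ h]; rfl
  · intro c hc
    rcases Multiset.mem_add.1 hc with h | h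
    · exact hC' c h
    · exact hD' c h

lemma Decomp.biUnion {ι : Type} [DecidableEq ι] (s : Finset ι) (g : ι → Finset (Sym2 V))
    (hg : ∀ i ∈ s, Decomp (g i)) (h : ∀ i ∈ s, ∀ j ∈ s, i ≠ j → Disjoint (g i) (g j)) :
    Decomp (s.biUnion g) := by
  induction s using Finset.induction with
  | empty => exact ⟨0, by simp, by simp⟩
  | insert a s ha ih =>
    rw [Finset.biUnion_insert]
    apply Decomp.union (hg a (by simp))
    · exact ih (fun i hi => hg i (by simp [hi]))
        (fun i hi j hj => h i (by simp [hi]) j (by simp [hj]))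
    · rw [Finset.disjoint_biUnion_right]
      intro i hi
      exact h a (by simp) i (by simp [hi]) (by rintro rfl; exact ha hi)

lemma Decomp.of_walk {S : Finset (Sym2 V)} (w : List V) (h1 : 4 ≤ w.length)
    (h2 : w.head? = w.getLast?) (h3 : w.tail.Nodup) (h4 : (walkEdges w).Nodup)
    (h5 : ∀ e, e ∈ walkEdges w ↔ e ∈ S) : Decomp S := by
  refine ⟨{S.val}, by simp, ?_⟩
  intro c hc
  rw [Multiset.mem_singleton] at hc
  subst hc
  refine ⟨w, h1, h2, h3, ?_⟩
  rw [Multiset.Nodup.ext h4 S.nodup]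
  exact h5

lemma walkEdges_append (x y : V) : ∀ (u v : List V), 
    walkEdges (u ++ x :: y :: v) = walkEdges (u ++ [x]) + (s(x, y) ::ₘ walkEdges (y :: v))
  | [], v => by simp [walkEdges_cons_cons, walkEdges_single]
  | [a], v => by simp [walkEdges_cons_cons, walkEdges_single, Multiset.cons_swap]
  | a :: b :: u, v => by
      have := walkEdges_append x y (b :: u) v
      simp only [List.cons_append] at this ⊢
      rw [walkEdges_cons_cons, this, walkEdges_cons_cons, Multiset.cons_add]

lemma walkEdges_reverse : ∀ (w : List V), walkEdges w.reverse = walkEdges w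
  | [] => rfl
  | [a] => rfl
  | a :: b :: w => by
      have ih := walkEdges_reverse (b :: w)
      rw [walkEdges_cons_cons, ← ih]
      simp only [List.reverse_cons, List.append_assoc, List.singleton_append, List.cons_append,
        List.nil_append]
      rw [walkEdges_append, walkEdges_single, Sym2.eq_swap, Multiset.add_cons, add_zero]

lemma walkEdges_range (g : ℕ → V) (k : ℕ) : ∀ a : ℕ,
    walkEdges ((List.range' a (k + 1)).map g) =
      (((List.range' a k).map fun l => s(g l, g (l + 1)) : List (Sym2 V)) :
        Multiset (Sym2 V)) := by
  induction k with
  | zero => intro a; rfl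
  | succ k ih =>
    intro a
    have := ih (a + 1)
    rw [List.range'_succ, List.map_cons] at this
    rw [List.range'_succ, List.range'_succ, List.map_cons, List.map_cons, walkEdges_cons_cons,
      this, List.range'_succ, List.map_cons]
    rfl

lemma X_decomp (φ : CNF3) (i : ℕ) (h : 1 ≤ μ φ i) : Decomp (Xedges φ i) := by
  obtain ⟨K, hK⟩ : ∃ K, 6 * μ φ i = K + 1 := ⟨6 * μ φ i - 1, by omega⟩
  have hK5 : 5 ≤ K := by omega
  have hw : walkEdges (((List.range' 1 (K+1)).map (V3.t i)) ++
      (V3.t i 1 :: (List.range' 1 (K+1)).map (V3.f i)).reverse) =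
      (((List.range' 1 K).map fun l => s(V3.t i l, V3.t i (l + 1)) : List (Sym2 V3)) :
        Multiset (Sym2 V3)) + (s(V3.t i (K+1), V3.f i (K+1)) ::ₘ s(V3.t i 1, V3.f i 1) ::ₘ 
        (((List.range' 1 K).map fun l => s(V3.f i l, V3.f i (l + 1)) : List (Sym2 V3)) :
        Multiset (Sym2 V3))) := by
    have e1 : ∀ g : ℕ → V3, (List.range' 1 (K+1)).map g =
        (List.range' 1 K).map g ++ [g (K+1)] := by
      intro g; rw [List.range'_1_concat, List.map_append, add_comm 1 K]; rfl
    have e2 : (V3.t i 1 :: (List.range' 1 (K+1)).map (V3.f i)).reverse =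
        V3.f i (K+1) :: (V3.t i 1 :: (List.range' 1 K).map (V3.f i)).reverse := by
      rw [e1]; simp
    have e3 : walkEdges (V3.t i 1 :: (List.range' 1 (K+1)).map (V3.f i)).reverse = 
        s(V3.t i 1, V3.f i 1) ::ₘ 
        (((List.range' 1 K).map fun l => s(V3.f i l, V3.f i (l + 1)) : List (Sym2 V3)) :
        Multiset (Sym2 V3)) := by
      rw [walkEdges_reverse, ← walkEdges_range, List.range'_succ, List.map_cons,
        walkEdges_cons_cons]
    rw [← e3, e2, ← walkEdges_range, e1 (V3.t i), List.append_assoc, List.singleton_append,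
      walkEdges_append]
  apply Decomp.of_walk (((List.range' 1 (K+1)).map (V3.t i)) ++
      (V3.t i 1 :: (List.range' 1 (K+1)).map (V3.f i)).reverse)
  · simp; omega
  · have : ∀ (a : V3) (l m : List V3) (b : V3),
        (a :: l ++ (b :: m).reverse).getLast? = some b := by
      intro a l m b
      rw [List.reverse_cons, ← List.append_assoc, List.getLast?_concat]
    rw [List.range'_succ, List.map_cons, this]
    rfl
  · rw [List.range'_succ]
    simp only [List.map_cons, List.cons_append, List.tail_cons, List.reverse_cons]
    have n1 : ((List.range' (1 + 1) K).map (V3.t i)).Nodup :=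
      List.Nodup.map (fun x y h => by simpa using h) List.nodup_range'
    have n2 : ((List.range' (1 + 1) K).map (V3.f i)).Nodup :=
      List.Nodup.map (fun x y h => by simpa using h) List.nodup_range'
    simp [List.nodup_append, List.nodup_reverse, n1, n2, List.mem_range'_1]
    grind
  · rw [hw]
    have n1 : ((List.range' 1 K).map fun l => s(V3.t i l, V3.t i (l + 1))).Nodup :=
      List.Nodup.map (fun x y h => by simp at h; omega) List.nodup_range'
    have n2 : ((List.range' 1 K).map fun l => s(V3.f i l, V3.f i (l + 1))).Nodup :=
      List.Nodup.map (fun x y h => by simp at h; omega) List.nodup_range'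
    rw [Multiset.nodup_add, Multiset.nodup_cons, Multiset.nodup_cons, Multiset.coe_nodup,
      Multiset.coe_nodup, Multiset.disjoint_left]
    refine ⟨n1, ⟨?_, ?_, n2⟩, ?_⟩
    · simp; omega
    · simp
    · intro e he
      obtain ⟨l, -, rfl⟩ := List.mem_map.1 (Multiset.mem_coe.1 he)
      simp
  · intro e
    rw [hw]
    simp only [Xedges, hK, Multiset.mem_add, Multiset.mem_cons, Multiset.mem_coe, List.mem_map,
      List.mem_range'_1, Finset.mem_union, Finset.mem_image, Finset.mem_Ico, Finset.mem_insert,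
      Finset.mem_singleton, add_comm 1 K, Sym2.eq_swap (a := V3.t i 1)]
    rw [or_assoc, or_comm (a := ∃ a, (1 ≤ a ∧ a < K + 1) ∧ s(V3.f i a, V3.f i (a + 1)) = e), or_assoc]

lemma Y_decomp (φ : CNF3) (i : ℕ) (h : 1 ≤ μ φ i) : Decomp (Yedges φ i) := by
  apply Decomp.of_walk [V3.t i (6 * μ φ i), V3.f ((i + 1) % φ.n) 1, V3.f i (6 * μ φ i),
    V3.t ((i + 1) % φ.n) 1, V3.t i (6 * μ φ i)]
  · simp
  · simp
  · simp; omega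
  · simp [walkEdges, walkEdgeList]
  · intro e
    simp [walkEdges, walkEdgeList, Yedges]

lemma posOf_pos (φ : CNF3) (i j : ℕ) (h : j ∈ occ φ i) : 1 ≤ posOf φ i j :=
  Finset.card_pos.2 ⟨j, by simp [h]⟩

lemma posOf_le (φ : CNF3) (i j : ℕ) : posOf φ i j ≤ μ φ i :=
  Finset.card_le_card (Finset.filter_subset _ _)

lemma Z_decomp (φ : CNF3) (i j : ℕ) (h : j ∈ occ φ i) : Decomp (Zedges φ i j) := by
  have := posOf_pos φ i j h
  apply Decomp.of_walk [V3.t i (6 * posOf φ i j - 3), V3.c1 j, V3.a i j, V3.c2 j,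
    V3.t i (6 * posOf φ i j - 2), V3.b i j, V3.t i (6 * posOf φ i j - 3)]
  · simp
  · simp
  · simp; omega
  · simp [walkEdges, walkEdgeList]; omega
  · intro e
    simp [walkEdges, walkEdgeList, Zedges]

lemma Zb_decomp (φ : CNF3) (i j : ℕ) (h : j ∈ occ φ i) : Decomp (Zbedges φ i j) := by
  have := posOf_pos φ i j h
  apply Decomp.of_walk [V3.f i (6 * posOf φ i j - 3), V3.c1 j, V3.a i j, V3.c2 j,
    V3.f i (6 * posOf φ i j - 2), V3.b i j, V3.f i (6 * posOf φ i j - 3)]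
  · simp
  · simp
  · simp; omega
  · simp [walkEdges, walkEdgeList]; omega
  · intro e
    simp [walkEdges, walkEdgeList, Zbedges]

lemma mem_occ_of (φ : CNF3) {j : ℕ} (hj : j < φ.m) {p : ℕ × Bool} (hp : p ∈ φ.clause j) :
    j ∈ occ φ p.1 := by
  rcases p with ⟨i, _ | _⟩ <;> simp [occ, hj, hp]

lemma XX_disj (φ : CNF3) (i i' : ℕ) (h : i ≠ i') : Disjoint (Xedges φ i) (Xedges φ i') := by
  have key : ∀ k, ∀ e ∈ Xedges φ k, ∀ v ∈ e, (∃ l, v = V3.t k l) ∨ (∃ l, v = V3.f k l) := by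
    intro k e he v hv
    simp only [Xedges, Finset.mem_union, Finset.mem_image, Finset.mem_insert,
      Finset.mem_singleton] at he
    rcases he with ((⟨l, -, rfl⟩ | ⟨l, -, rfl⟩) | rfl | rfl) <;>
      rcases Sym2.mem_iff.1 hv with rfl | rfl <;> simp
  rw [Finset.disjoint_left]
  intro e h1 h2
  induction e using Sym2.ind with
  | _ x y =>
    have a := key i _ h1 x (by simp)
    have b := key i' _ h2 x (by simp)
    rcases a with ⟨l, rfl⟩ | ⟨l, rfl⟩ <;> simp_all

lemma XY_disj (φ : CNF3) (i i' : ℕ) (h : 1 ≤ μ φ i) (h' : 1 ≤ μ φ i') :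
    Disjoint (Xedges φ i) (Yedges φ i') := by
  rw [Finset.disjoint_left]
  intro e h1 h2
  simp only [Xedges, Yedges, Finset.mem_union, Finset.mem_image, Finset.mem_insert,
      Finset.mem_singleton, Finset.mem_Ico] at h1 h2
  rcases h1 with ((⟨l, hl, rfl⟩ | ⟨l, hl, rfl⟩) | rfl | rfl) <;>
    simp only [Sym2.eq_iff, V3.t.injEq, V3.f.injEq, reduceCtorEq] at h2 <;> grind

lemma YY_disj (φ : CNF3) (i i' : ℕ) (h : 1 ≤ μ φ i) (h' : 1 ≤ μ φ i') (hne : i ≠ i') :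
    Disjoint (Yedges φ i) (Yedges φ i') := by
  rw [Finset.disjoint_left]
  intro e h1 h2
  simp only [Yedges, Finset.mem_insert, Finset.mem_singleton] at h1 h2
  rcases h1 with rfl | rfl | rfl | rfl <;>
    simp only [Sym2.eq_iff, V3.t.injEq, V3.f.injEq, reduceCtorEq] at h2 <;> grind

/-- The `Z`-cycle of a literal occurrence. -/
def ZZ (φ : CNF3) (j : ℕ) (p : ℕ × Bool) : Finset (Sym2 V3) :=
  if p.2 then Zedges φ p.1 j else Zbedges φ p.1 j

lemma XZ_disj (φ : CNF3) (i j : ℕ) (p : ℕ × Bool) : Disjoint (Xedges φ i) (ZZ φ j p) := by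
  rw [Finset.disjoint_left]
  intro e h1 h2
  rcases p with ⟨i', _ | _⟩ <;>
  simp only [ZZ, Xedges, Zedges, Zbedges, Finset.mem_union, Finset.mem_image, Finset.mem_insert,
      Finset.mem_singleton, if_true, Bool.false_eq_true, if_false] at h1 h2 <;>
  rcases h1 with ((⟨l, hl, rfl⟩ | ⟨l, hl, rfl⟩) | rfl | rfl) <;>
    simp at h2

lemma YZ_disj (φ : CNF3) (i j : ℕ) (p : ℕ × Bool) : Disjoint (Yedges φ i) (ZZ φ j p) := by
  rw [Finset.disjoint_left]
  intro e h1 h2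
  rcases p with ⟨i', _ | _⟩ <;>
  simp only [ZZ, Yedges, Zedges, Zbedges, Finset.mem_insert,
      Finset.mem_singleton, if_true, Bool.false_eq_true, if_false] at h1 h2 <;>
  rcases h1 with rfl | rfl | rfl | rfl <;>
    simp at h2

lemma ZZ_disj (φ : CNF3) (j j' : ℕ) (p p' : ℕ × Bool) (h : j ≠ j' ∨ p.1 ≠ p'.1) :
    Disjoint (ZZ φ j p) (ZZ φ j' p') := by
  rw [Finset.disjoint_left]
  intro e h1 h2
  rcases p with ⟨i, _ | _⟩ <;> rcases p' with ⟨i', _ | _⟩ <;>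
  simp only [ZZ, Zedges, Zbedges, Finset.mem_insert,
      Finset.mem_singleton, if_true, Bool.false_eq_true, if_false] at h1 h2 h <;>
  rcases h1 with rfl | rfl | rfl | rfl | rfl | rfl <;>
    simp at h2 <;> grind

lemma E0_decomp (φ : CNF3) (hμ : ∀ i < φ.n, 1 ≤ μ φ i) : Decomp (E0 φ) := by
  have hE : E0 φ = ((Finset.range φ.n).biUnion fun i => Xedges φ i) ∪
    ((Finset.range φ.n).biUnion fun i => Yedges φ i) ∪
    ((Finset.range φ.m).biUnion fun j => (φ.clause j).biUnion fun p => ZZ φ j p) := rfl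
  rw [hE]
  apply Decomp.union
  · apply Decomp.union
    · apply Decomp.biUnion
      · intro i hi
        exact X_decomp φ i (hμ i (by simpa using hi))
      · intro i hi j hj hij
        exact XX_disj φ i j hij
    · apply Decomp.biUnion
      · intro i hi
        exact Y_decomp φ i (hμ i (by simpa using hi))
      · intro i hi j hj hij
        exact YY_disj φ i j (hμ i (by simpa using hi)) (hμ j (by simpa using hj)) hij
    · simp only [Finset.disjoint_biUnion_left, Finset.disjoint_biUnion_right, Finset.mem_range]
      intro i hi j hj
      exact XY_disj φ _ _ (hμ _ (by assumption)) (hμ _ (by assumption))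
  · apply Decomp.biUnion
    · intro j hj
      have hj' : j < φ.m := by simpa using hj
      apply Decomp.biUnion
      · intro p hp
        have := mem_occ_of φ hj' hp
        unfold ZZ
        split_ifs
        · exact Z_decomp φ _ _ this
        · exact Zb_decomp φ _ _ this
      · intro p hp q hq hpq
        apply ZZ_disj
        right
        intro heq
        have := φ.no_taut j hj' p.1
        rcases p with ⟨i, _ | _⟩ <;> rcases q with ⟨i', _ | _⟩ <;> simp_all
    · intro j hj j' hj' hne
      simp only [Finset.disjoint_biUnion_left, Finset.disjoint_biUnion_right]
      intros
      exact ZZ_disj _ _ _ _ _ (Or.inl hne)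
  · simp only [Finset.disjoint_union_left, Finset.disjoint_biUnion_left,
      Finset.disjoint_biUnion_right]
    intro j _ p _
    exact ⟨fun i _ => XZ_disj _ _ _ _, fun i _ => YZ_disj _ _ _ _⟩

/-! ### Connectivity -/

lemma mAdj_reach_symm {M : Multiset (Sym2 V)} {a b : V}
    (h : Relation.ReflTransGen (mAdj M) a b) : Relation.ReflTransGen (mAdj M) b a := by
  have : Std.Symm (mAdj M) := ⟨fun x y hxy => by unfold mAdj at *; rwa [Sym2.eq_swap]⟩
  exact (Relation.ReflTransGen.stdSymm (r := mAdj M)).symm _ _ h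

lemma E0_connected (φ : CNF3) (hμ : ∀ i < φ.n, 1 ≤ μ φ i) : mConnected (E0 φ).val := by
  have hX : ∀ i < φ.n, ∀ x y, s(x, y) ∈ Xedges φ i → mAdj (E0 φ).val x y := by
    intro i hi x y h
    simp only [mAdj, Finset.mem_val, E0, Finset.mem_union, Finset.mem_biUnion, Finset.mem_range]
    exact Or.inl (Or.inl ⟨i, hi, h⟩)
  have hY : ∀ i < φ.n, ∀ x y, s(x, y) ∈ Yedges φ i → mAdj (E0 φ).val x y := by
    intro i hi x y h
    simp only [mAdj, Finset.mem_val, E0, Finset.mem_union, Finset.mem_biUnion, Finset.mem_range]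
    exact Or.inl (Or.inr ⟨i, hi, h⟩)
  have hZ : ∀ j < φ.m, ∀ p ∈ φ.clause j, ∀ x y, s(x, y) ∈ ZZ φ j p → mAdj (E0 φ).val x y := by
    intro j hj p hp x y h
    simp only [mAdj, Finset.mem_val, E0, Finset.mem_union, Finset.mem_biUnion, Finset.mem_range]
    exact Or.inr ⟨j, hj, p, hp, h⟩
  have ht : ∀ i < φ.n, ∀ l, 1 ≤ l → l ≤ 6 * μ φ i →
      Relation.ReflTransGen (mAdj (E0 φ).val) (V3.t i 1) (V3.t i l) := by
    intro i hi l hl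
    induction l, hl using Nat.le_induction with
    | base => intro _; exact .refl
    | succ l hl ih =>
      intro h
      refine (ih (by omega)).tail (hX i hi _ _ ?_)
      simp only [Xedges, Finset.mem_union, Finset.mem_image, Finset.mem_Ico]
      exact Or.inl (Or.inl ⟨l, by omega, rfl⟩)
  have hf : ∀ i < φ.n, ∀ l, 1 ≤ l → l ≤ 6 * μ φ i →
      Relation.ReflTransGen (mAdj (E0 φ).val) (V3.t i 1) (V3.f i l) := by
    intro i hi l hl
    induction l, hl using Nat.le_induction with
    | base =>
      intro _
      refine Relation.ReflTransGen.single (hX i hi _ _ ?_)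
      simp [Xedges]
    | succ l hl ih =>
      intro h
      refine (ih (by omega)).tail (hX i hi _ _ ?_)
      simp only [Xedges, Finset.mem_union, Finset.mem_image, Finset.mem_Ico]
      exact Or.inl (Or.inr ⟨l, by omega, rfl⟩)
  have h0 : ∀ i < φ.n, Relation.ReflTransGen (mAdj (E0 φ).val) (V3.t 0 1) (V3.t i 1) := by
    intro i
    induction i with
    | zero => intro _; exact .refl
    | succ i ih =>
      intro hi
      have hi' : i < φ.n := by omega
      have := hμ i hi'
      refine ((ih hi').trans (ht i hi' (6 * μ φ i) (by omega) le_rfl)).tail (hY i hi' _ _ ?_)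
      simp [Yedges, Nat.mod_eq_of_lt hi]
  have hT : ∀ i < φ.n, ∀ l, 1 ≤ l → l ≤ 6 * μ φ i →
      Relation.ReflTransGen (mAdj (E0 φ).val) (V3.t 0 1) (V3.t i l) :=
    fun i hi l h1 h2 => (h0 i hi).trans (ht i hi l h1 h2)
  have hF : ∀ i < φ.n, ∀ l, 1 ≤ l → l ≤ 6 * μ φ i →
      Relation.ReflTransGen (mAdj (E0 φ).val) (V3.t 0 1) (V3.f i l) :=
    fun i hi l h1 h2 => (h0 i hi).trans (hf i hi l h1 h2)
  have main : ∀ v ∈ mVerts (E0 φ).val,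
      Relation.ReflTransGen (mAdj (E0 φ).val) (V3.t 0 1) v := by
    rintro v ⟨e, he, hv⟩
    simp only [Finset.mem_val, E0, Finset.mem_union, Finset.mem_biUnion, Finset.mem_range] at he
    rcases he with (⟨i, hi, he⟩ | ⟨i, hi, he⟩) | ⟨j, hj, p, hp, he⟩
    · have := hμ i hi
      simp only [Xedges, Finset.mem_union, Finset.mem_image, Finset.mem_insert,
        Finset.mem_singleton, Finset.mem_Ico] at he
      rcases he with ((⟨l, hl, rfl⟩ | ⟨l, hl, rfl⟩) | rfl | rfl) <;>
        rcases Sym2.mem_iff.1 hv with rfl | rfl <;>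
        first
          | exact hT _ hi _ (by omega) (by omega)
          | exact hF _ hi _ (by omega) (by omega)
    · have := hμ i hi
      have hi2 : (i + 1) % φ.n < φ.n := Nat.mod_lt _ (by omega)
      have := hμ _ hi2
      simp only [Yedges, Finset.mem_insert, Finset.mem_singleton] at he
      rcases he with rfl | rfl | rfl | rfl <;>
        rcases Sym2.mem_iff.1 hv with rfl | rfl <;>
        first
          | exact hT _ hi _ (by omega) (by omega)
          | exact hF _ hi _ (by omega) (by omega)
          | exact hT _ hi2 _ (by omega) (by omega)
          | exact hF _ hi2 _ (by omega) (by omega)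
    · have hi := φ.var_lt j hj p hp
      have h1 := posOf_pos φ _ _ (mem_occ_of φ hj hp)
      have h2 := posOf_le φ p.1 j
      have hadj := hZ j hj p hp
      rcases p with ⟨i, _ | _⟩
      · simp only [ZZ, Bool.false_eq_true, if_false] at he hadj hi h1 h2
        have r0 := hF i hi (6 * posOf φ i j - 3) (by omega) (by omega)
        have r1 := r0.tail (hadj _ (V3.c1 j) (by simp [Zbedges]))
        have r2 := r1.tail (hadj _ (V3.a i j) (by simp [Zbedges]))
        have r3 := r2.tail (hadj _ (V3.c2 j) (by simp [Zbedges]))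
        have r4 := hF i hi (6 * posOf φ i j - 2) (by omega) (by omega)
        have r5 := r4.tail (hadj _ (V3.b i j) (by simp [Zbedges]))
        simp only [Zbedges, Finset.mem_insert, Finset.mem_singleton] at he
        rcases he with rfl | rfl | rfl | rfl | rfl | rfl <;>
          rcases Sym2.mem_iff.1 hv with rfl | rfl <;> assumption
      · simp only [ZZ, if_true] at he hadj hi h1 h2
        have r0 := hT i hi (6 * posOf φ i j - 3) (by omega) (by omega)
        have r1 := r0.tail (hadj _ (V3.c1 j) (by simp [Zedges]))
        have r2 := r1.tail (hadj _ (V3.a i j) (by simp [Zedges]))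
        have r3 := r2.tail (hadj _ (V3.c2 j) (by simp [Zedges]))
        have r4 := hT i hi (6 * posOf φ i j - 2) (by omega) (by omega)
        have r5 := r4.tail (hadj _ (V3.b i j) (by simp [Zedges]))
        simp only [Zedges, Finset.mem_insert, Finset.mem_singleton] at he
        rcases he with rfl | rfl | rfl | rfl | rfl | rfl <;>
          rcases Sym2.mem_iff.1 hv with rfl | rfl <;> assumption
  intro u hu v hv
  exact (mAdj_reach_symm (main u hu)).trans (main v hv)

/-- In the HCPP instance `I_φ` produced by the construction from a 3-CNF formula `φ`
(in which every variable occurs in some clause), the multigraph `⟨G⟩E_0` induced by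
the edge class `E_0` is Eulerian: it is connected and it is the union of pairwise
edge-disjoint cycles, so every vertex of `⟨G⟩E_0` is balanced. -/
theorem E0_eulerian (φ : CNF3) (hμ : ∀ i < φ.n, 1 ≤ μ φ i) :
    mConnected (E0 φ).val ∧
    (∃ C : Multiset (Multiset (Sym2 V3)),
      C.sum = (E0 φ).val ∧ ∀ c ∈ C, IsCycleEdgeSet c) ∧
    ∀ v ∈ mVerts (E0 φ).val, Even (mDeg (E0 φ).val v) := by
  obtain ⟨C, hC, hC'⟩ := E0_decomp φ hμ
  refine ⟨E0_connected φ hμ, ⟨C, hC, hC'⟩, ?_⟩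
  intro v _
  rw [← hC]
  exact sum_even v hC'

end HCPPFormal
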